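/- Let a, b, c, d ∈ ℝ with d > 0, 1 + a + b + c > 0, d² = 1 + 2abc − a² − b² − c², |a|,|b|,|c| < 1, and define Ω = 2π − arg((bc − a + id)(ac − b + id)(ab − c + id)). Then tan(Ω/2) = d/(1 + a + b + c). -/

import Mathlib

open Real Complex

/-- Van Oosterom–Strackee formula via the product representation:
if `Ω = 2π - arg((bc-a+id)(ac-b+id)(ab-c+id))` then `tan(Ω/2) = d/(1+a+b+c)`. -/
theorem tan_half_solid_angle_triangle (a b c d Ω : ℝ)
    (hd : 0 < d) (hsum : 0 < 1 + a + b + c)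
    (hgram : d ^ 2 = 1 + 2 * a * b * c - a ^ 2 - b ^ 2 - c ^ 2)
    (ha : |a| < 1) (hb : |b| < 1) (hc : |c| < 1)
    (hΩ : Ω = 2 * π - (((b * c - a : ℂ) + d * I) * ((a * c - b : ℂ) + d * I)
      * ((a * b - c : ℂ) + d * I)).arg) :
    Real.tan (Ω / 2) = d / (1 + a + b + c) := by
  obtain ⟨ha1, ha2⟩ := abs_lt.mp ha
  obtain ⟨hb1, hb2⟩ := abs_lt.mp hb
  obtain ⟨hc1, hc2⟩ := abs_lt.mp hc
  have hk : 0 < (1 - a) * (1 - b) * (1 - c) / 2 := by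
    have h1 : 0 < 1 - a := by linarith
    have h2 : 0 < 1 - b := by linarith
    have h3 : 0 < 1 - c := by linarith
    positivity
  set z : ℂ := ⟨1 + a + b + c, -d⟩ with hz
  have hP : ((b * c - a : ℂ) + d * I) * ((a * c - b : ℂ) + d * I)
      * ((a * b - c : ℂ) + d * I)
      = (((1 - a) * (1 - b) * (1 - c) / 2 : ℝ) : ℂ) * (z * z) := by
    apply Complex.ext
    · rw [Complex.re_ofReal_mul]
      simp only [hz, Complex.mul_re, Complex.mul_im, Complex.add_re, Complex.add_im,
        Complex.sub_re, Complex.sub_im, Complex.ofReal_re, Complex.ofReal_im,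
        Complex.I_re, Complex.I_im]
      linear_combination (-((b * c - a) + (a * c - b) + (a * b - c))
        + (1 - a) * (1 - b) * (1 - c) / 2) * hgram
    · rw [Complex.im_ofReal_mul]
      simp only [hz, Complex.mul_re, Complex.mul_im, Complex.add_re, Complex.add_im,
        Complex.sub_re, Complex.sub_im, Complex.ofReal_re, Complex.ofReal_im,
        Complex.I_re, Complex.I_im]
      linear_combination (-d) * hgram
  have hz0 : z ≠ 0 := by
    intro h
    have := congrArg Complex.re h
    simp [hz] at this
    linarith
  have harg : |z.arg| < π / 2 := Complex.abs_arg_lt_pi_div_two_iff.mpr (Or.inl hsum)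
  obtain ⟨h1, h2⟩ := abs_lt.mp harg
  rw [hP, Complex.arg_real_mul _ hk,
    Complex.arg_mul hz0 hz0 ⟨by linarith, by linarith⟩] at hΩ
  have hh : Ω / 2 = π - z.arg := by rw [hΩ]; ring
  rw [hh, Real.tan_pi_sub, Complex.tan_arg]
  simp [hz, neg_div]
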